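/- For every behaviour P with M settings, the measure of free choice μ_F(P) equals the supremum of p ∈ [0,1] such that P decomposes pointwise as P = p·P_F + (1−p)·Q, where P_F is a behaviour admitting an LHV+FHV model and Q is a behaviour admitting an LHV model with respect to some full-support setting distribution. -/

import Mathlib

/-! For a setting distribution `sp`, the free weights of LHV models and the decomposition weights of
`P` have the same supremum, which therefore does not depend on `sp`.

* Any behaviour `Q` has an LHV model for any setting distribution: take the four outcome pairs as
  hidden variables, each answering deterministically, with `q(a, b | x, y) = Q(a, b | x, y)`.
  Mixing this model with a local-free model of `P_F` gives an LHV model of `p P_F + (1 - p) Q` in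
  which all points coming from `P_F` are free, so its free weight is at least `p`
  (`exists_LHV_of_decomposition`).
* Conversely, grouping the free points of an LHV model of free weight `w` splits `P` into a
  nonnegative part of total mass `w` and a nonnegative rest of mass `1 - w`; normalising both parts
  yields a decomposition of weight `w` (`decomposition_of_LHV`). The rest is local for `sp` because
  every behaviour is. If `w` is `0` or `1`, one of the parts vanishes and its normalisation may be
  replaced by anything.

For `M = 0` there is no setting distribution at all, and both sides are `0`. -/

open scoped BigOperators Classical
open Finset

noncomputable section

/-- The real value `±1` associated with a Boolean outcome. -/
def outVal (a : Bool) : ℝ := if a then 1 else -1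

/-- A behaviour: nonnegative probabilities summing to one for every pair of settings. -/
def IsBehaviour {M N : ℕ} (P : Bool → Bool → Fin M → Fin N → ℝ) : Prop :=
  (∀ a b x y, 0 ≤ P a b x y) ∧ (∀ x y, ∑ a, ∑ b, P a b x y = 1)

/-- A full-support probability distribution on pairs of settings. -/
def IsSettingDist {M : ℕ} (p : Fin M → Fin M → ℝ) : Prop :=
  (∀ x y, 0 < p x y) ∧ ∑ x, ∑ y, p x y = 1

/-- A hidden-variable model of the behaviour `P` with setting distribution `p`,
with finite hidden-variable space `Fin n`. -/
structure HVModel (M : ℕ) (P : Bool → Bool → Fin M → Fin M → ℝ)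
    (p : Fin M → Fin M → ℝ) where
  n : ℕ
  q : Fin n → ℝ
  q_nonneg : ∀ l, 0 ≤ q l
  q_sum : ∑ l, q l = 1
  qc : Fin M → Fin M → Fin n → ℝ
  qc_nonneg : ∀ x y l, 0 ≤ qc x y l
  qc_sum : ∀ x y, ∑ l, qc x y l = 1
  q_marg : ∀ l, q l = ∑ x, ∑ y, qc x y l * p x y
  Pc : Fin n → Bool → Bool → Fin M → Fin M → ℝ
  Pc_nonneg : ∀ l a b x y, 0 ≤ Pc l a b x y
  Pc_sum : ∀ l x y, ∑ a, ∑ b, Pc l a b x y = 1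
  reproduce : ∀ a b x y, P a b x y = ∑ l, Pc l a b x y * qc x y l

namespace HVModel

variable {M : ℕ} {P : Bool → Bool → Fin M → Fin M → ℝ} {p : Fin M → Fin M → ℝ}

/-- A hidden variable is local if the conditional outcome distribution factorises. -/
def IsLocalPoint (N : HVModel M P p) (l : Fin N.n) : Prop :=
  ∃ α β : Bool → Fin M → ℝ,
    (∀ a x, 0 ≤ α a x) ∧ (∀ x, ∑ a, α a x = 1) ∧
    (∀ b y, 0 ≤ β b y) ∧ (∀ y, ∑ b, β b y = 1) ∧
    (∀ a b x y, N.Pc l a b x y = α a x * β b y)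

/-- A hidden variable is free if it is independent of the settings. -/
def IsFreePoint (N : HVModel M P p) (l : Fin N.n) : Prop :=
  ∀ x y, N.qc x y l = N.q l

/-- The total weight of the local hidden variables. -/
def localWeight (N : HVModel M P p) : ℝ :=
  ∑ l, if N.IsLocalPoint l then N.q l else 0

/-- The total weight of the free hidden variables. -/
def freeWeight (N : HVModel M P p) : ℝ :=
  ∑ l, if N.IsFreePoint l then N.q l else 0

/-- An FHV model: every hidden variable is free. -/
def IsFHV (N : HVModel M P p) : Prop := ∀ l, N.IsFreePoint l

/-- An LHV model: every hidden variable is local. -/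
def IsLHV (N : HVModel M P p) : Prop := ∀ l, N.IsLocalPoint l

end HVModel

/-- Local weights achievable by FHV models of `P` with setting distribution `p`. -/
def FHVLocalWeights (M : ℕ) (P : Bool → Bool → Fin M → Fin M → ℝ)
    (p : Fin M → Fin M → ℝ) : Set ℝ :=
  {w | ∃ N : HVModel M P p, N.IsFHV ∧ w = N.localWeight}

/-- Free weights achievable by LHV models of `P` with setting distribution `p`. -/
def LHVFreeWeights (M : ℕ) (P : Bool → Bool → Fin M → Fin M → ℝ)
    (p : Fin M → Fin M → ℝ) : Set ℝ :=
  {w | ∃ N : HVModel M P p, N.IsLHV ∧ w = N.freeWeight}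

/-- The measure of locality `μ_L`. -/
def muL (M : ℕ) (P : Bool → Bool → Fin M → Fin M → ℝ) : ℝ :=
  ⨅ sp : {f : Fin M → Fin M → ℝ // IsSettingDist f}, sSup (FHVLocalWeights M P sp.1)

/-- The measure of free choice `μ_F`. -/
def muF (M : ℕ) (P : Bool → Bool → Fin M → Fin M → ℝ) : ℝ :=
  ⨅ sp : {f : Fin M → Fin M → ℝ // IsSettingDist f}, sSup (LHVFreeWeights M P sp.1)

/-- A behaviour admits an LHV+FHV model (is local-free). -/
def LocalFree {M N : ℕ} (P : Bool → Bool → Fin M → Fin N → ℝ) : Prop :=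
  ∃ (n : ℕ) (q : Fin n → ℝ) (A : Bool → Fin M → Fin n → ℝ) (B : Bool → Fin N → Fin n → ℝ),
    (∀ l, 0 ≤ q l) ∧ (∑ l, q l = 1) ∧
    (∀ a x l, 0 ≤ A a x l) ∧ (∀ x l, ∑ a, A a x l = 1) ∧
    (∀ b y l, 0 ≤ B b y l) ∧ (∀ y l, ∑ b, B b y l = 1) ∧
    (∀ a b x y, P a b x y = ∑ l, q l * A a x l * B b y l)

/-- An LHV model may be given on an arbitrary finite type of hidden variables; the unconditional
weights are then determined as the marginals of the conditional ones. -/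
lemma exists_LHV_of_fintype {M : ℕ} {P : Bool → Bool → Fin M → Fin M → ℝ}
    {sp : Fin M → Fin M → ℝ} (hsp : IsSettingDist sp) {Λ : Type} [Fintype Λ]
    (qc : Fin M → Fin M → Λ → ℝ) (qc_nonneg : ∀ x y l, 0 ≤ qc x y l)
    (qc_sum : ∀ x y, ∑ l, qc x y l = 1)
    (α β : Λ → Bool → Fin M → ℝ)
    (hα : ∀ l a x, 0 ≤ α l a x) (hα1 : ∀ l x, ∑ a, α l a x = 1)
    (hβ : ∀ l b y, 0 ≤ β l b y) (hβ1 : ∀ l y, ∑ b, β l b y = 1)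
    (hP : ∀ a b x y, P a b x y = ∑ l, α l a x * β l b y * qc x y l) :
    ∃ N : HVModel M P sp, N.IsLHV ∧ N.freeWeight =
      ∑ l, if ∀ x y, qc x y l = ∑ x, ∑ y, qc x y l * sp x y
        then ∑ x, ∑ y, qc x y l * sp x y else 0 := by
  let e := Fintype.equivFin Λ
  refine ⟨{ n := Fintype.card Λ
            q := fun i => ∑ x, ∑ y, qc x y (e.symm i) * sp x y
            q_nonneg := fun i => Finset.sum_nonneg fun x _ => Finset.sum_nonneg fun y _ =>
              mul_nonneg (qc_nonneg _ _ _) (hsp.1 x y).le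
            q_sum := ?_
            qc := fun x y i => qc x y (e.symm i)
            qc_nonneg := fun x y i => qc_nonneg _ _ _
            qc_sum := fun x y => by
              rw [Equiv.sum_comp e.symm (fun l => qc x y l)]; exact qc_sum x y
            q_marg := fun i => rfl
            Pc := fun i a b x y => α (e.symm i) a x * β (e.symm i) b y
            Pc_nonneg := fun i a b x y => mul_nonneg (hα _ _ _) (hβ _ _ _)
            Pc_sum := fun i x y => by
              rw [← Finset.sum_mul_sum, hα1, hβ1, one_mul]
            reproduce := fun a b x y => by
              rw [Equiv.sum_comp e.symm (fun l => α l a x * β l b y * qc x y l)]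
              exact hP a b x y }, ?_, ?_⟩
  · rw [Equiv.sum_comp e.symm (fun l => ∑ x, ∑ y, qc x y l * sp x y), Finset.sum_comm, ← hsp.2]
    refine Finset.sum_congr rfl fun x _ => ?_
    rw [Finset.sum_comm]
    refine Finset.sum_congr rfl fun y _ => ?_
    rw [← Finset.sum_mul, qc_sum, one_mul]
  · exact fun i => ⟨α (e.symm i), β (e.symm i), hα _, hα1 _, hβ _, hβ1 _, fun _ _ _ _ => rfl⟩
  · rw [← Equiv.sum_comp e.symm (fun l => if ∀ x y, qc x y l = ∑ x, ∑ y, qc x y l * sp x y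
        then ∑ x, ∑ y, qc x y l * sp x y else 0)]
    unfold HVModel.freeWeight HVModel.IsFreePoint
    -- The two sides differ only in their decidability instances.
    refine Finset.sum_congr rfl fun i _ => ?_
    congr

/-- Mixing a local-free behaviour with an arbitrary one: the points of the local-free model stay
free, whereas the four extra points, one per outcome pair, carry the second behaviour in their
setting-dependent weights. -/
lemma exists_LHV_of_decomposition {M : ℕ} {P PF Q : Bool → Bool → Fin M → Fin M → ℝ}
    {sp : Fin M → Fin M → ℝ} (hsp : IsSettingDist sp) {p : ℝ} (hp0 : 0 ≤ p) (hp1 : p ≤ 1)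
    (hPF : LocalFree PF) (hQ : IsBehaviour Q)
    (hP : ∀ a b x y, P a b x y = p * PF a b x y + (1 - p) * Q a b x y) :
    ∃ N : HVModel M P sp, N.IsLHV ∧ p ≤ N.freeWeight := by
  obtain ⟨n, q, A, B, hq, hq1, hA, hA1, hB, hB1, hrep⟩ := hPF
  have hp1' : 0 ≤ 1 - p := by linarith
  let qc : Fin M → Fin M → Fin n ⊕ Bool × Bool → ℝ := fun x y =>
    Sum.elim (fun l => p * q l) (fun c => (1 - p) * Q c.1 c.2 x y)
  have hqc : ∀ x y l, 0 ≤ qc x y l := by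
    rintro x y (l | c)
    · exact mul_nonneg hp0 (hq l)
    · exact mul_nonneg hp1' (hQ.1 _ _ _ _)
  obtain ⟨N, hN, hw⟩ := exists_LHV_of_fintype (P := P) hsp qc hqc
    (fun x y => by
      rw [Fintype.sum_sum_type]
      simp only [qc, Sum.elim_inl, Sum.elim_inr]
      rw [← Finset.mul_sum, ← Finset.mul_sum, hq1, Fintype.sum_prod_type, hQ.2]
      ring)
    (Sum.elim (fun l a x => A a x l) (fun c a _ => if a = c.1 then 1 else 0))
    (Sum.elim (fun l b y => B b y l) (fun c b _ => if b = c.2 then 1 else 0))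
    (by
      rintro (l | c) a x
      · exact hA a x l
      · simp only [Sum.elim_inr]; split_ifs <;> norm_num)
    (by
      rintro (l | c) x
      · exact hA1 x l
      · simp)
    (by
      rintro (l | c) b y
      · exact hB b y l
      · simp only [Sum.elim_inr]; split_ifs <;> norm_num)
    (by
      rintro (l | c) y
      · exact hB1 y l
      · simp)
    (fun a b x y => by
      rw [Fintype.sum_sum_type, hP, hrep, Finset.mul_sum]
      congr 1
      · refine Finset.sum_congr rfl fun l _ => ?_
        simp only [qc, Sum.elim_inl]
        ring
      · rw [Fintype.sum_prod_type]
        simp [qc])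
  refine ⟨N, hN, ?_⟩
  have hmarg : ∀ l, ∑ x, ∑ y, p * q l * sp x y = p * q l := fun l => by
    simp only [← Finset.mul_sum]
    rw [hsp.2, mul_one]
  rw [hw, Fintype.sum_sum_type]
  have h1 : ∑ l : Fin n, (if ∀ x y, qc x y (Sum.inl l) = ∑ x, ∑ y, qc x y (Sum.inl l) * sp x y
      then ∑ x, ∑ y, qc x y (Sum.inl l) * sp x y else 0) = p := by
    simp only [qc, Sum.elim_inl, hmarg, implies_true, if_true]
    rw [← Finset.mul_sum, hq1, mul_one]
  rw [h1]
  refine le_add_of_nonneg_right (Finset.sum_nonneg fun c _ => ?_)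
  split_ifs
  · exact Finset.sum_nonneg fun x _ => Finset.sum_nonneg fun y _ =>
      mul_nonneg (hqc _ _ _) (hsp.1 x y).le
  · exact le_rfl

lemma LocalFree.isBehaviour {M : ℕ} {P : Bool → Bool → Fin M → Fin M → ℝ} (h : LocalFree P) :
    IsBehaviour P := by
  obtain ⟨n, q, A, B, hq, hq1, hA, hA1, hB, hB1, hrep⟩ := h
  refine ⟨fun a b x y => ?_, fun x y => ?_⟩
  · rw [hrep]
    exact Finset.sum_nonneg fun l _ => mul_nonneg (mul_nonneg (hq l) (hA _ _ _)) (hB _ _ _)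
  · calc ∑ a, ∑ b, P a b x y = ∑ l, ∑ a, ∑ b, q l * A a x l * B b y l := by
          simp only [hrep, Fintype.sum_bool, Finset.sum_add_distrib]
      _ = ∑ l, q l := by
          refine Finset.sum_congr rfl fun l _ => ?_
          simp only [← Finset.mul_sum, hB1, mul_one, hA1]
      _ = 1 := hq1

lemma exists_localFree (M : ℕ) : ∃ P : Bool → Bool → Fin M → Fin M → ℝ, LocalFree P :=
  ⟨fun _ _ _ _ => 1 / 4, 1, fun _ => 1, fun _ _ _ => 1 / 2, fun _ _ _ => 1 / 2,
    by simp, by simp, by intros; norm_num, by intros; norm_num, by intros; norm_num,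
    by intros; norm_num, by intros; norm_num⟩

lemma exists_LHV {M : ℕ} {Q : Bool → Bool → Fin M → Fin M → ℝ} {sp : Fin M → Fin M → ℝ}
    (hsp : IsSettingDist sp) (hQ : IsBehaviour Q) : ∃ N : HVModel M Q sp, N.IsLHV := by
  obtain ⟨PF, hPF⟩ := exists_localFree M
  obtain ⟨N, hN, -⟩ := exists_LHV_of_decomposition (P := Q) hsp le_rfl zero_le_one hPF hQ
    (fun a b x y => by ring)
  exact ⟨N, hN⟩

lemma HVModel.freeWeight_nonneg {M : ℕ} {P : Bool → Bool → Fin M → Fin M → ℝ}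
    {sp : Fin M → Fin M → ℝ} (N : HVModel M P sp) : 0 ≤ N.freeWeight :=
  Finset.sum_nonneg fun l _ => by
    split_ifs
    · exact N.q_nonneg l
    · exact le_rfl

lemma HVModel.freeWeight_le_one {M : ℕ} {P : Bool → Bool → Fin M → Fin M → ℝ}
    {sp : Fin M → Fin M → ℝ} (N : HVModel M P sp) : N.freeWeight ≤ 1 := by
  rw [← N.q_sum]
  refine Finset.sum_le_sum fun l _ => ?_
  split_ifs
  · exact le_rfl
  · exact N.q_nonneg l

/-- A nonnegative family over outcome pairs with total mass zero vanishes. -/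
lemma eq_zero_of_mass_zero {f : Bool → Bool → ℝ} (hf : ∀ a b, 0 ≤ f a b)
    (h : ∑ a, ∑ b, f a b = 0) (a b : Bool) : f a b = 0 := by
  have h1 := (Finset.sum_eq_zero_iff_of_nonneg
    (fun a _ => Finset.sum_nonneg fun b _ => hf a b)).1 h a (Finset.mem_univ a)
  exact (Finset.sum_eq_zero_iff_of_nonneg (fun b _ => hf a b)).1 h1 b (Finset.mem_univ b)

/-- Normalising the contributions of the free and of the remaining points of an LHV model. -/
lemma decomposition_of_LHV {M : ℕ} {P : Bool → Bool → Fin M → Fin M → ℝ} (hP : IsBehaviour P)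
    {sp : Fin M → Fin M → ℝ} (N : HVModel M P sp) (hN : N.IsLHV) :
    ∃ PF Q : Bool → Bool → Fin M → Fin M → ℝ, LocalFree PF ∧ IsBehaviour Q ∧
      ∀ a b x y, P a b x y = N.freeWeight * PF a b x y + (1 - N.freeWeight) * Q a b x y := by
  choose α β hα hα1 hβ hβ1 hPc using hN
  have hw0 := N.freeWeight_nonneg
  have hw1 := N.freeWeight_le_one
  set w := N.freeWeight with hw
  let r : Fin N.n → ℝ := fun l => if N.IsFreePoint l then N.q l else 0
  have hr0 : ∀ l, 0 ≤ r l := fun l => by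
    simp only [r]
    split_ifs
    · exact N.q_nonneg l
    · exact le_rfl
  have hrsum : ∑ l, r l = w := rfl
  have hrqc : ∀ l x y, r l ≤ N.qc x y l := fun l x y => by
    simp only [r]
    split_ifs with h
    · exact (h x y).ge
    · exact N.qc_nonneg x y l
  -- `S` is the unnormalised contribution of the free points.
  let S : Bool → Bool → Fin M → Fin M → ℝ := fun a b x y => ∑ l, r l * α l a x * β l b y
  have hS0 : ∀ a b x y, 0 ≤ S a b x y := fun a b x y =>
    Finset.sum_nonneg fun l _ => mul_nonneg (mul_nonneg (hr0 l) (hα _ _ _)) (hβ _ _ _)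
  have hSP : ∀ a b x y, 0 ≤ P a b x y - S a b x y := fun a b x y => by
    rw [sub_nonneg, N.reproduce]
    refine Finset.sum_le_sum fun l _ => ?_
    rw [hPc, mul_assoc, mul_comm]
    exact mul_le_mul_of_nonneg_left (hrqc l x y) (mul_nonneg (hα _ _ _) (hβ _ _ _))
  have hSsum : ∀ x y, ∑ a, ∑ b, S a b x y = w := fun x y => by
    calc ∑ a, ∑ b, S a b x y = ∑ l, ∑ a, ∑ b, r l * α l a x * β l b y := by
          simp only [S, Fintype.sum_bool, Finset.sum_add_distrib]
      _ = ∑ l, r l := by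
          refine Finset.sum_congr rfl fun l _ => ?_
          simp only [← Finset.mul_sum, hβ1, mul_one, hα1]
      _ = w := hrsum
  have hRsum : ∀ x y, ∑ a, ∑ b, (P a b x y - S a b x y) = 1 - w := fun x y => by
    simp only [Finset.sum_sub_distrib, hP.2, hSsum]
  have hfree : ∃ PF : Bool → Bool → Fin M → Fin M → ℝ, LocalFree PF ∧
      ∀ a b x y, S a b x y = w * PF a b x y := by
    rcases hw0.eq_or_lt with h0 | h0
    · obtain ⟨PF, hPF⟩ := exists_localFree M
      refine ⟨PF, hPF, fun a b x y => ?_⟩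
      rw [← h0, zero_mul]
      exact eq_zero_of_mass_zero (fun a b => hS0 a b x y) ((hSsum x y).trans h0.symm) a b
    · refine ⟨fun a b x y => S a b x y / w, ⟨N.n, fun l => r l / w, fun a x l => α l a x,
        fun b y l => β l b y, fun l => div_nonneg (hr0 l) hw0, ?_, fun a x l => hα l a x,
        fun x l => hα1 l x, fun b y l => hβ l b y, fun y l => hβ1 l y, fun a b x y => ?_⟩,
        fun a b x y => ?_⟩
      · rw [← Finset.sum_div, hrsum, div_self h0.ne']
      · simp only [S]
        rw [Finset.sum_div]
        exact Finset.sum_congr rfl fun l _ => by ring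
      · field_simp
  have hrest : ∃ Q : Bool → Bool → Fin M → Fin M → ℝ, IsBehaviour Q ∧
      ∀ a b x y, P a b x y - S a b x y = (1 - w) * Q a b x y := by
    rcases hw1.eq_or_lt with h1 | h1
    · refine ⟨P, hP, fun a b x y => ?_⟩
      rw [h1, sub_self, zero_mul]
      exact eq_zero_of_mass_zero (fun a b => hSP a b x y)
        ((hRsum x y).trans (by rw [h1, sub_self])) a b
    · have h1' : 0 < 1 - w := sub_pos.2 h1
      refine ⟨fun a b x y => (P a b x y - S a b x y) / (1 - w),
        ⟨fun a b x y => div_nonneg (hSP a b x y) h1'.le, fun x y => ?_⟩, fun a b x y => ?_⟩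
      · simp only [← Finset.sum_div]
        rw [hRsum, div_self h1'.ne']
      · field_simp
  obtain ⟨PF, hPF, hS⟩ := hfree
  obtain ⟨Q, hQ, hR⟩ := hrest
  refine ⟨PF, Q, hPF, hQ, fun a b x y => ?_⟩
  rw [← hS, ← hR]
  ring

theorem muF_eq_sup_decompositions (M : ℕ)
    (P : Bool → Bool → Fin M → Fin M → ℝ) (hP : IsBehaviour P) :
    muF M P = sSup {p : ℝ | p ∈ Set.Icc (0 : ℝ) 1 ∧
      ∃ PF Q : Bool → Bool → Fin M → Fin M → ℝ,
        IsBehaviour PF ∧ LocalFree PF ∧ IsBehaviour Q ∧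
        (∃ ps : Fin M → Fin M → ℝ, IsSettingDist ps ∧
          ∃ NQ : HVModel M Q ps, NQ.IsLHV) ∧
        ∀ a b x y, P a b x y = p * PF a b x y + (1 - p) * Q a b x y} := by
  set D : Set ℝ := {p : ℝ | p ∈ Set.Icc (0 : ℝ) 1 ∧
      ∃ PF Q : Bool → Bool → Fin M → Fin M → ℝ,
        IsBehaviour PF ∧ LocalFree PF ∧ IsBehaviour Q ∧
        (∃ ps : Fin M → Fin M → ℝ, IsSettingDist ps ∧
          ∃ NQ : HVModel M Q ps, NQ.IsLHV) ∧
        ∀ a b x y, P a b x y = p * PF a b x y + (1 - p) * Q a b x y} with hD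
  have key : ∀ sp : {f : Fin M → Fin M → ℝ // IsSettingDist f},
      sSup (LHVFreeWeights M P sp.1) = sSup D := by
    rintro ⟨sp, hsp⟩
    have hsub : LHVFreeWeights M P sp ⊆ D := by
      rintro w ⟨N, hN, rfl⟩
      obtain ⟨PF, Q, hPF, hQ, h⟩ := decomposition_of_LHV hP N hN
      exact ⟨⟨N.freeWeight_nonneg, N.freeWeight_le_one⟩, PF, Q, hPF.isBehaviour, hPF, hQ,
        ⟨sp, hsp, exists_LHV hsp hQ⟩, h⟩
    have hne : (LHVFreeWeights M P sp).Nonempty := by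
      obtain ⟨N, hN⟩ := exists_LHV hsp hP
      exact ⟨_, N, hN, rfl⟩
    have hbdd : BddAbove D := ⟨1, fun p hp => hp.1.2⟩
    refine le_antisymm (csSup_le_csSup hbdd hne hsub) (csSup_le (hne.mono hsub) ?_)
    rintro p ⟨⟨hp0, hp1⟩, PF, Q, -, hPF, hQ, -, h⟩
    obtain ⟨N, hN, hle⟩ := exists_LHV_of_decomposition hsp hp0 hp1 hPF hQ h
    exact hle.trans (le_csSup (hbdd.mono hsub) ⟨N, hN, rfl⟩)
  unfold muF
  rcases isEmpty_or_nonempty {f : Fin M → Fin M → ℝ // IsSettingDist f} with hE | hE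
  · -- Only `M = 0` occurs here; the infimum over the empty type and `sSup ∅` are both `0`.
    have hempty : D = ∅ := by
      ext p
      simp only [Set.mem_empty_iff_false, iff_false]
      rintro ⟨-, PF, Q, -, -, -, ⟨ps, hps, -⟩, -⟩
      exact hE.false ⟨ps, hps⟩
    rw [hempty, Real.iInf_of_isEmpty, Real.sSup_empty]
  · simp only [key, ciInf_const]
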